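/- Let k ∈ (0,1). Then I_2^− = −32(17 − 32k² + 32k⁴). Moreover, if k² is a rational number, then Kuznetsov's moment integral I_n^− is a rational number for every n ∈ ℕ. -/

import Mathlib

/-!
Write `p = K(k)`, `q = K(k')`, and let `℘` be the Weierstrass function of the lattice spanned by
`2p ± 2qi`. Each moment `I_n^-` turns out to be an integer multiple of the derivative of order
`2n + 2` of `℘` at the half period `2p`.

*Integrals as lattice sums.* After the substitution `x = t²`, the identity
`cosh a - cos b = exp a · (1 - w)(1 - w̄) / 2` with `w = exp (-a + bi)` and two geometric series turn
each of the two integrals into a double series of `(2n+4)`-th inverse powers (`hasSum_moment`). The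
two series are the sums over opposite quadrants of the lattice translated by `2p`, so together they
give `∑ (l - 2p)^{-(2n+4)}` (`moment_add_moment`), which is `℘^{(2n+2)}(2p) / (2n+3)!`
(`halfDeriv_eq_sumInvPow`).

*Derivatives by recursion.* The function `f = ℘ - ℘(2p)` satisfies `f'' = 6f² + 4Af + 2B` with
`A = 3℘(2p)` and `B = 3℘(2p)² - g₂/4`, and `f`, `f'` vanish at `2p`. Hence its derivatives at `2p`
are polynomials in `A` and `B` with rational coefficients (`halfDeriv_rec`).

*The coefficients.* It remains to see that `A = (1 - 2k²)/2` and `B = 1/16` (`coeff_values`). On the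
real line `y(u) = f(u + 2p)` satisfies `y'² = 4y(y² + Ay + B)` and increases from `0` to `∞` on
`(0, 2p)`, which expresses `p` as a complete elliptic integral of a modulus `κ` computed from `A`
and `B`. Multiplication by `i` exchanges `p` and `q` and replaces `A` by `-A`, so `q` is the same
multiple of `K(κ')`. As `K/K'` is strictly monotone in the modulus, `κ = k`, and the scale is fixed.
-/

open MeasureTheory Real

/-- The complete elliptic integral of the first kind `K(k)`. -/
noncomputable def ellipticK (k : ℝ) : ℝ :=
  ∫ θ in (0 : ℝ)..(π / 2), (1 - k ^ 2 * Real.sin θ ^ 2) ^ (-(1 / 2) : ℝ)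

/-- Kuznetsov's moment integral `I_n^+`, realizing
`(1/2)∫_ℝ x^n dx/(cos(√x K) + cosh(√x K'))` with `√x = i√(−x)` for `x < 0`. -/
noncomputable def Iplus (k : ℝ) (n : ℕ) : ℝ :=
  (1 / 2) * (∫ x in Set.Ioi (0 : ℝ), x ^ n /
      (Real.cos (ellipticK k * Real.sqrt x) +
        Real.cosh (ellipticK (Real.sqrt (1 - k ^ 2)) * Real.sqrt x)))
  + ((-1 : ℝ) ^ n / 2) * (∫ x in Set.Ioi (0 : ℝ), x ^ n /
      (Real.cosh (ellipticK k * Real.sqrt x) +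
        Real.cos (ellipticK (Real.sqrt (1 - k ^ 2)) * Real.sqrt x)))

/-- Kuznetsov's moment integral `I_n^−`, realizing
`∫_ℝ x^{n+1} dx/(cos(√x K) − cosh(√x K'))` with `√x = i√(−x)` for `x < 0`. -/
noncomputable def Iminus (k : ℝ) (n : ℕ) : ℝ :=
  (∫ x in Set.Ioi (0 : ℝ), x ^ (n + 1) /
      (Real.cos (ellipticK k * Real.sqrt x) -
        Real.cosh (ellipticK (Real.sqrt (1 - k ^ 2)) * Real.sqrt x)))
  + (-1 : ℝ) ^ (n + 1) * (∫ x in Set.Ioi (0 : ℝ), x ^ (n + 1) /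
      (Real.cosh (ellipticK k * Real.sqrt x) -
        Real.cos (ellipticK (Real.sqrt (1 - k ^ 2)) * Real.sqrt x)))

/-! ### The differential equation `y'' = 6y² + 4Ay + 2B` on the real line -/

/-- Uniqueness for the initial value problem of `y'' = 6y² + 4Ay + 2B` on an open interval. -/
lemma ode_unique {A B a b t₀ : ℝ} {y y' z z' : ℝ → ℝ} (ht : t₀ ∈ Set.Ioo a b)
    (hy : ∀ t ∈ Set.Ioo a b, HasDerivAt y (y' t) t)
    (hy' : ∀ t ∈ Set.Ioo a b, HasDerivAt y' (6 * y t ^ 2 + 4 * A * y t + 2 * B) t)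
    (hz : ∀ t ∈ Set.Ioo a b, HasDerivAt z (z' t) t)
    (hz' : ∀ t ∈ Set.Ioo a b, HasDerivAt z' (6 * z t ^ 2 + 4 * A * z t + 2 * B) t)
    (h0 : y t₀ = z t₀) (h1 : y' t₀ = z' t₀) : Set.EqOn y z (Set.Ioo a b) := by
  let v : ℝ × ℝ → ℝ × ℝ := fun x => (x.2, 6 * x.1 ^ 2 + 4 * A * x.1 + 2 * B)
  have hv : ContDiff ℝ 1 v := by fun_prop
  have key := isMIntegralCurveOn_Ioo_eqOn_of_contMDiff_boundaryless
    (I := modelWithCornersSelf ℝ (ℝ × ℝ)) (v := v) (γ := fun t => (y t, y' t))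
    (γ' := fun t => (z t, z' t)) ht (contMDiff_vectorSpace_iff_contDiff.mpr hv)
    (fun t h => ((hy t h).prodMk (hy' t h)).hasFDerivAt.hasMFDerivAt.hasMFDerivWithinAt)
    (fun t h => ((hz t h).prodMk (hz' t h)).hasFDerivAt.hasMFDerivAt.hasMFDerivWithinAt)
    (by simp [h0, h1])
  intro t h
  exact congrArg Prod.fst (key h)

/-- A solution of `y'' = 6y² + 4Ay + 2B` with `y(0) = 0` that blows up at `p` is strictly
increasing on `(0, p)`: if `y'(u) = 0`, then `y` is symmetric about `u` by uniqueness, so it stays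
bounded near `p`. -/
lemma ode_pos {A B p : ℝ} (hp : 0 < p) {y y' : ℝ → ℝ}
    (hy : ∀ t ∈ Set.Ioo (-p) p, HasDerivAt y (y' t) t)
    (hy' : ∀ t ∈ Set.Ioo (-p) p, HasDerivAt y' (6 * y t ^ 2 + 4 * A * y t + 2 * B) t)
    (h0 : y 0 = 0)
    (htop : Filter.Tendsto y (nhdsWithin p (Set.Iio p)) Filter.atTop) :
    (∀ t ∈ Set.Ioo 0 p, 0 < y' t) ∧ (∀ t ∈ Set.Ioo 0 p, 0 < y t) := by
  have hsub : Set.Ioo 0 p ⊆ Set.Ioo (-p) p := Set.Ioo_subset_Ioo_left (by linarith)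
  have hne : ∀ u ∈ Set.Ioo 0 p, y' u ≠ 0 := by
    intro u hu hu0
    have hr : ∀ t ∈ Set.Ioo (2 * u - p) p, 2 * u - t ∈ Set.Ioo (-p) p := by
      rintro t ⟨h1, h2⟩; constructor <;> linarith [hu.1, hu.2]
    have hs : Set.Ioo (2 * u - p) p ⊆ Set.Ioo (-p) p :=
      Set.Ioo_subset_Ioo_left (by linarith [hu.1])
    have key := ode_unique (A := A) (B := B) (a := 2 * u - p) (b := p) (t₀ := u)
      (y := y) (y' := y') (z := fun t => y (2 * u - t)) (z' := fun t => - y' (2 * u - t))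
      ⟨by linarith [hu.2], hu.2⟩ (fun t h => hy t (hs h)) (fun t h => hy' t (hs h))
      (fun t h => by
        have := (hy _ (hr t h)).comp t ((hasDerivAt_id t).const_sub (2 * u))
        simpa [Function.comp_def] using this)
      (fun t h => by
        have := ((hy' _ (hr t h)).comp t ((hasDerivAt_id t).const_sub (2 * u))).fun_neg
        simpa [Function.comp_def] using this)
      (by ring_nf) (by ring_nf; simp [hu0])
    have hc : Filter.Tendsto (fun t => y (2 * u - t)) (nhdsWithin p (Set.Iio p))
        (nhds (y (2 * u - p))) := by
      have h1 : ContinuousAt y (2 * u - p) :=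
        (hy _ ⟨by linarith [hu.1], by linarith [hu.2]⟩).continuousAt
      have h2 : Filter.Tendsto (fun t => 2 * u - t) (nhds p) (nhds (2 * u - p)) :=
        (continuous_const.sub continuous_id).tendsto p
      exact (h1.tendsto.comp h2).mono_left nhdsWithin_le_nhds
    have hev : y =ᶠ[nhdsWithin p (Set.Iio p)] fun t => y (2 * u - t) := by
      filter_upwards [Ioo_mem_nhdsLT (show 2 * u - p < p by linarith [hu.2])] with t h
      exact key h
    exact not_tendsto_nhds_of_tendsto_atTop (htop.congr' hev) _ hc
  have hcont : ContinuousOn y' (Set.Ioo 0 p) := fun t h =>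
    (hy' t (hsub h)).continuousAt.continuousWithinAt
  -- a point with positive derivative, from the mean value theorem
  obtain ⟨c, hc, hcpos⟩ : ∃ c ∈ Set.Ioo 0 p, 0 < y' c := by
    obtain ⟨s, hs1, hs2⟩ := ((htop.eventually_gt_atTop 0).and (Ioo_mem_nhdsLT hp)).exists
    obtain ⟨c, hc, hc'⟩ := exists_hasDerivAt_eq_slope y y' hs2.1
      (fun t h => (hy t ⟨by linarith [h.1], by linarith [h.2, hs2.2]⟩).continuousAt.continuousWithinAt)
      (fun t h => hy t ⟨by linarith [h.1], by linarith [h.2, hs2.2]⟩)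
    refine ⟨c, ⟨hc.1, hc.2.trans hs2.2⟩, ?_⟩
    rw [hc', h0]
    exact div_pos (by linarith) (by linarith [hs2.1])
  have hpos : ∀ t ∈ Set.Ioo 0 p, 0 < y' t := by
    intro t ht
    by_contra hneg
    push Not at hneg
    obtain ⟨d, hd, hd0⟩ := (isPreconnected_Ioo (a := (0:ℝ)) (b := p)).intermediate_value ht hc hcont
      ⟨hneg, hcpos.le⟩
    exact hne d hd hd0
  refine ⟨hpos, fun t ht => ?_⟩
  have hmono : StrictMonoOn y (Set.Ico 0 p) := by
    apply strictMonoOn_of_deriv_pos (convex_Ico 0 p)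
    · exact fun t h => (hy t ⟨by linarith [h.1], h.2⟩).continuousAt.continuousWithinAt
    · intro t h
      rw [interior_Ico] at h
      rw [(hy t (hsub h)).deriv]; exact hpos t h
  simpa [h0] using hmono ⟨le_rfl, hp⟩ ⟨ht.1.le, ht.2⟩ ht.1

/-- Since `y` sweeps out `(0, ∞)` while `y'` does not vanish, the quadratic factor of the cubic is
positive on `(0, ∞)`; `B = 0` would force `y = 0`. -/
lemma ode_coeff {A B p : ℝ} (hp : 0 < p) {y y' : ℝ → ℝ}
    (hy : ∀ t ∈ Set.Ioo (-p) p, HasDerivAt y (y' t) t)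
    (hy' : ∀ t ∈ Set.Ioo (-p) p, HasDerivAt y' (6 * y t ^ 2 + 4 * A * y t + 2 * B) t)
    (hsq : ∀ t ∈ Set.Ioo (-p) p, y' t ^ 2 = 4 * y t * (y t ^ 2 + A * y t + B))
    (h0 : y 0 = 0)
    (htop : Filter.Tendsto y (nhdsWithin p (Set.Iio p)) Filter.atTop) :
    0 < B ∧ ∀ s, 0 < s → 0 < s ^ 2 + A * s + B := by
  obtain ⟨hpos', hpos⟩ := ode_pos hp hy hy' h0 htop
  have hs : ∀ s, 0 < s → 0 < s ^ 2 + A * s + B := by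
    intro s hs
    obtain ⟨u, hu1, hu2⟩ := ((htop.eventually_gt_atTop s).and (Ioo_mem_nhdsLT hp)).exists
    obtain ⟨t, ht, rfl⟩ := intermediate_value_Ioo hu2.1.le (f := y)
      (fun t h => (hy t ⟨by linarith [h.1], by linarith [h.2, hu2.2]⟩).continuousAt.continuousWithinAt)
      ⟨by rw [h0]; exact hs, hu1⟩
    have ht' : t ∈ Set.Ioo 0 p := ⟨ht.1, ht.2.trans hu2.2⟩
    have h1 := hsq t ⟨by linarith [ht.1], ht'.2⟩
    have h2 := pow_pos (hpos' t ht') 2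
    rw [h1] at h2
    exact (pos_iff_pos_of_mul_pos h2).mp (by linarith)
  refine ⟨?_, hs⟩
  have hB : 0 ≤ B := by
    have hc : Filter.Tendsto (fun s : ℝ => s ^ 2 + A * s + B) (nhdsWithin 0 (Set.Ioi 0)) (nhds B) := by
      have : Continuous (fun s : ℝ => s ^ 2 + A * s + B) := by fun_prop
      simpa using (this.tendsto 0).mono_left nhdsWithin_le_nhds
    exact ge_of_tendsto hc (by filter_upwards [self_mem_nhdsWithin] with s h using (hs s h).le)
  refine lt_of_le_of_ne hB fun hB0 => ?_
  have h1 : y' 0 = 0 := by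
    have := hsq 0 ⟨by linarith, hp⟩
    simpa [h0] using this
  have hz := ode_unique (A := A) (B := B) (z := fun _ => 0) (z' := fun _ => 0)
    (t₀ := 0) ⟨by linarith, hp⟩ hy hy' (fun t _ => hasDerivAt_const t 0)
    (fun t _ => by simpa [← hB0] using hasDerivAt_const t (0:ℝ)) h0 h1
  have := hz (show p / 2 ∈ Set.Ioo (-p) p from ⟨by linarith, by linarith⟩)
  exact (hpos (p / 2) ⟨by linarith, by linarith⟩).ne' this

/-! ### Complete elliptic integrals -/

lemma one_sub_pos {k : ℝ} (hk : k ^ 2 < 1) (θ : ℝ) : 0 < 1 - k ^ 2 * Real.sin θ ^ 2 := by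
  nlinarith [Real.sin_sq_le_one θ, sq_nonneg (Real.sin θ), sq_nonneg k]

lemma continuous_integrand {k : ℝ} (hk : k ^ 2 < 1) :
    Continuous fun θ : ℝ => (1 - k ^ 2 * Real.sin θ ^ 2) ^ (-(1 / 2) : ℝ) :=
  Continuous.rpow_const (by fun_prop) fun θ => Or.inl (one_sub_pos hk θ).ne'

lemma ellipticK_pos {k : ℝ} (hk : k ^ 2 < 1) : 0 < ellipticK k :=
  intervalIntegral.intervalIntegral_pos_of_pos ((continuous_integrand hk).intervalIntegrable _ _)
    (fun θ => Real.rpow_pos_of_pos (one_sub_pos hk θ) _) (by positivity)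

lemma ellipticK_lt {k l : ℝ} (hkl : k ^ 2 < l ^ 2) (hl : l ^ 2 < 1) :
    ellipticK k < ellipticK l := by
  have hk := hkl.trans hl
  have hpi : (0 : ℝ) < π / 2 := by positivity
  apply intervalIntegral.integral_lt_integral_of_continuousOn_of_le_of_exists_lt hpi
    (continuous_integrand hk).continuousOn (continuous_integrand hl).continuousOn
  · intro θ _
    apply Real.rpow_le_rpow_of_nonpos (one_sub_pos hl θ) _ (by norm_num)
    nlinarith [sq_nonneg (Real.sin θ)]
  · refine ⟨π / 2, ⟨hpi.le, le_rfl⟩, ?_⟩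
    apply Real.rpow_lt_rpow_of_neg (one_sub_pos hl _) _ (by norm_num)
    simpa using hkl

/-- The modulus is determined by the ratio `K / K'`, because `K` increases and `K'` decreases with
the modulus. -/
lemma ellipticK_eq_of_ratio {k k' l l' c : ℝ}
    (hk0 : 0 < k ^ 2) (hk1 : k ^ 2 < 1) (hl0 : 0 < l ^ 2) (hl1 : l ^ 2 < 1)
    (hk' : k' ^ 2 = 1 - k ^ 2) (hl' : l' ^ 2 = 1 - l ^ 2)
    (h : ellipticK l = c * ellipticK k) (h' : ellipticK l' = c * ellipticK k') :
    l ^ 2 = k ^ 2 ∧ c = 1 := by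
  have key : l ^ 2 = k ^ 2 := by
    rcases lt_trichotomy (l ^ 2) (k ^ 2) with hlt | heq | hlt
    · have h1 := ellipticK_lt hlt hk1
      have h2 := ellipticK_lt (k := k') (l := l') (by linarith) (by linarith)
      have p1 := ellipticK_pos hk1
      have p2 := ellipticK_pos (k := k') (by linarith)
      rw [h] at h1; rw [h'] at h2
      have c1 : c < 1 := by by_contra hc; push Not at hc; nlinarith
      nlinarith
    · exact heq
    · have h1 := ellipticK_lt hlt hl1
      have h2 := ellipticK_lt (k := l') (l := k') (by linarith) (by linarith)
      have p1 := ellipticK_pos hk1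
      have p2 := ellipticK_pos (k := k') (by linarith)
      rw [h] at h1; rw [h'] at h2
      have c1 : 1 < c := by by_contra hc; push Not at hc; nlinarith
      nlinarith
  refine ⟨key, ?_⟩
  have : ellipticK l = ellipticK k := by unfold ellipticK; rw [key]
  have p1 := ellipticK_pos hk1
  have : (c - 1) * ellipticK k = 0 := by linarith
  rcases mul_eq_zero.mp this with h | h <;> linarith

lemma integral_zero_pi {k : ℝ} (hk : k ^ 2 < 1) :
    ∫ θ in (0 : ℝ)..π, (1 - k ^ 2 * Real.sin θ ^ 2) ^ (-(1 / 2) : ℝ) = 2 * ellipticK k := by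
  have hi := fun a b => (continuous_integrand hk).intervalIntegrable (μ := volume) a b
  rw [← intervalIntegral.integral_add_adjacent_intervals (hi 0 (π / 2)) (hi (π / 2) π)]
  have : ∫ θ in (π / 2)..π, (1 - k ^ 2 * Real.sin θ ^ 2) ^ (-(1 / 2) : ℝ) = ellipticK k := by
    have h := intervalIntegral.integral_comp_sub_left (a := 0) (b := π / 2)
      (fun θ : ℝ => (1 - k ^ 2 * Real.sin θ ^ 2) ^ (-(1 / 2) : ℝ)) π
    simp only [Real.sin_pi_sub, sub_zero] at h
    rw [show π - π / 2 = π / 2 by ring] at h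
    exact h.symm
  rw [this]
  unfold ellipticK
  ring

lemma sin_two_arctan (w : ℝ) : Real.sin (2 * Real.arctan w) = 2 * w / (1 + w ^ 2) := by
  rw [Real.sin_two_mul, Real.sin_arctan, Real.cos_arctan]
  have h : 0 < 1 + w ^ 2 := by positivity
  have := Real.mul_self_sqrt h.le
  field_simp
  rw [Real.sq_sqrt h.le]

/-- Evaluation of the complete elliptic integral along a solution of
`y'² = 4y(y² + (2 - 4κ²)by + b²)`: with `φ = 2 arctan √(y/b)`, the equation becomes
`φ' = 2√b √(1 - κ² sin² φ)`, and `φ` runs from `0` to `π`. -/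
lemma ellipticK_of_ode {b κ p : ℝ} (hp : 0 < p) (hb : 0 < b) (hκ : κ ^ 2 < 1) {y y' : ℝ → ℝ}
    (hy : ∀ t ∈ Set.Ioo 0 p, HasDerivAt y (y' t) t)
    (hpos' : ∀ t ∈ Set.Ioo 0 p, 0 < y' t) (hpos : ∀ t ∈ Set.Ioo 0 p, 0 < y t)
    (hsq : ∀ t ∈ Set.Ioo 0 p,
      y' t ^ 2 = 4 * y t * (y t ^ 2 + (2 - 4 * κ ^ 2) * b * y t + b ^ 2))
    (h0 : Filter.Tendsto y (nhdsWithin 0 (Set.Ioi 0)) (nhds 0))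
    (htop : Filter.Tendsto y (nhdsWithin p (Set.Iio p)) Filter.atTop) :
    ellipticK κ = Real.sqrt b * p := by
  set f : ℝ → ℝ := fun θ => (1 - κ ^ 2 * Real.sin θ ^ 2) ^ (-(1 / 2) : ℝ) with hf
  set H : ℝ → ℝ := fun x => ∫ θ in (0 : ℝ)..x, f θ with hH
  have hfc : Continuous f := continuous_integrand hκ
  have hHd : ∀ x, HasDerivAt H (f x) x := fun x =>
    intervalIntegral.integral_hasDerivAt_right (hfc.intervalIntegrable _ _)
      (hfc.stronglyMeasurableAtFilter _ _) hfc.continuousAt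
  have hHc : Continuous H := continuous_iff_continuousAt.mpr fun x => (hHd x).continuousAt
  set φ : ℝ → ℝ := fun t => 2 * Real.arctan (Real.sqrt (y t / b)) with hφ
  have hder : ∀ t ∈ Set.Ioo 0 p, HasDerivAt (fun t => H (φ t)) (2 * Real.sqrt b) t := by
    intro t ht
    have hyp := hpos t ht
    have hyp' := hpos' t ht
    have hw : 0 < y t / b := div_pos hyp hb
    have h1 : HasDerivAt (fun t => Real.sqrt (y t / b)) (y' t / b / (2 * Real.sqrt (y t / b))) t :=
      ((hy t ht).div_const b).sqrt hw.ne'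
    have h2 := (h1.arctan).const_mul 2
    have h3 := (hHd (φ t)).comp t h2
    refine h3.congr_deriv ?_
    have hwv : 0 < Real.sqrt (y t / b) := Real.sqrt_pos.mpr hw
    have hwsq : Real.sqrt (y t / b) ^ 2 = y t / b := Real.sq_sqrt hw.le
    have hyw : y t = b * Real.sqrt (y t / b) ^ 2 := by rw [hwsq]; field_simp
    have hs := hsq t ht
    have hfeq : f (φ t) = (Real.sqrt (1 - κ ^ 2 * Real.sin (φ t) ^ 2))⁻¹ := by
      simp only [hf]
      rw [Real.rpow_neg (one_sub_pos hκ _).le, Real.sqrt_eq_rpow]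
    rw [hfeq, hφ, sin_two_arctan]
    have hpos1 := one_sub_pos hκ (φ t)
    rw [hφ, sin_two_arctan] at hpos1
    generalize Real.sqrt (y t / b) = w at *
    have hR := Real.sqrt_pos.mpr hpos1
    have hR2 := Real.sq_sqrt hpos1.le
    generalize Real.sqrt (1 - κ ^ 2 * (2 * w / (1 + w ^ 2)) ^ 2) = R at *
    have hB := Real.sqrt_pos.mpr hb
    have hB2 := Real.sq_sqrt hb.le
    generalize Real.sqrt b = s at *
    subst hB2
    have hw1 : 0 < 1 + w ^ 2 := by positivity
    have hR3 : R ^ 2 * (1 + w ^ 2) ^ 2 = (1 + w ^ 2) ^ 2 - 4 * κ ^ 2 * w ^ 2 := by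
      rw [hR2]; field_simp; ring
    have hy'eq : y' t = 2 * s ^ 3 * w * (R * (1 + w ^ 2)) := by
      rw [← sq_eq_sq₀ hyp'.le (by positivity), hs, hyw]
      linear_combination (-4 * s ^ 6 * w ^ 2) * hR3
    rw [hy'eq]
    field_simp
  have hconst : ∃ c, ∀ t ∈ Set.Ioo 0 p, H (φ t) = 2 * Real.sqrt b * t + c := by
    refine ⟨H (φ (p / 2)) - 2 * Real.sqrt b * (p / 2), fun t ht => ?_⟩
    have hD : ∀ t ∈ Set.Ioo 0 p, HasDerivAt (fun t => H (φ t) - 2 * Real.sqrt b * t) 0 t := by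
      intro t ht
      have := (hder t ht).sub ((hasDerivAt_id t).const_mul (2 * Real.sqrt b))
      simpa using! this
    have := (isOpen_Ioo (a := (0:ℝ)) (b := p)).is_const_of_deriv_eq_zero isPreconnected_Ioo
      (f := fun t => H (φ t) - 2 * Real.sqrt b * t)
      (fun t ht => (hD t ht).differentiableAt.differentiableWithinAt)
      (fun t ht => (hD t ht).deriv) ht (show p / 2 ∈ _ from ⟨by linarith, by linarith⟩)
    linarith
  obtain ⟨c, hc⟩ := hconst
  have hφ0 : Filter.Tendsto φ (nhdsWithin 0 (Set.Ioi 0)) (nhds 0) := by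
    have : Continuous fun x : ℝ => 2 * Real.arctan (Real.sqrt (x / b)) := by fun_prop
    simpa [Function.comp_def, hφ] using (this.tendsto 0).comp h0
  have hφp : Filter.Tendsto φ (nhdsWithin p (Set.Iio p)) (nhds π) := by
    have h1 : Filter.Tendsto (fun t => Real.sqrt (y t / b)) (nhdsWithin p (Set.Iio p))
        Filter.atTop := Real.tendsto_sqrt_atTop.comp (htop.atTop_div_const hb)
    have h2 := ((Real.tendsto_arctan_atTop.mono_right nhdsWithin_le_nhds).comp h1).const_mul 2
    rw [show 2 * (π / 2) = π by ring] at h2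
    exact h2
  have hc0 : c = 0 := by
    have h1 := (hHc.tendsto 0).comp hφ0
    have h2 : Filter.Tendsto (fun t => 2 * Real.sqrt b * t + c) (nhdsWithin 0 (Set.Ioi 0))
        (nhds (2 * Real.sqrt b * 0 + c)) :=
      (Continuous.tendsto (by fun_prop) 0).mono_left nhdsWithin_le_nhds
    have h3 := h2.congr' (by
      filter_upwards [Ioo_mem_nhdsGT hp] with t ht using (hc t ht).symm)
    have := tendsto_nhds_unique h3 h1
    simpa [hH] using this
  have h1 := (hHc.tendsto π).comp hφp
  have h2 : Filter.Tendsto (fun t => 2 * Real.sqrt b * t + c) (nhdsWithin p (Set.Iio p))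
      (nhds (2 * Real.sqrt b * p + c)) :=
    (Continuous.tendsto (by fun_prop) p).mono_left nhdsWithin_le_nhds
  have h3 := h2.congr' (by
    filter_upwards [Ioo_mem_nhdsLT hp] with t ht using (hc t ht).symm)
  have h4 := tendsto_nhds_unique h3 h1
  have h5 : H π = 2 * ellipticK κ := integral_zero_pi hκ
  rw [h5, hc0] at h4
  linarith

/-! ### The lattice spanned by `2p ± 2qi` -/

/-- The period pair `(2p + 2iq, 2p - 2iq)`. Its lattice is stable under conjugation and has the
real half period `2p`. -/
noncomputable def diagPair (p q : ℝ) (hp : 0 < p) (hq : 0 < q) : PeriodPair where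
  ω₁ := 2 * p + 2 * q * Complex.I
  ω₂ := 2 * p - 2 * q * Complex.I
  indep := by
    rw [LinearIndependent.pair_iff]
    intro s t h
    have h1 := congrArg Complex.re h
    have h2 := congrArg Complex.im h
    simp at h1 h2
    have h3 : p * (s + t) = 0 := by linarith
    have h4 : q * (s - t) = 0 := by linarith
    have h5 := (mul_eq_zero.mp h3).resolve_left hp.ne'
    have h6 := (mul_eq_zero.mp h4).resolve_left hq.ne'
    constructor <;> linarith

section Lattice

variable {p q : ℝ} (hp : 0 < p) (hq : 0 < q)

lemma mem_diagPair {x : ℂ} : x ∈ (diagPair p q hp hq).lattice ↔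
    ∃ m n : ℤ, (m : ℂ) * (2 * p + 2 * q * Complex.I) + n * (2 * p - 2 * q * Complex.I) = x :=
  PeriodPair.mem_lattice

lemma ofReal_notMem_diagPair {u : ℝ} (h0 : 0 < u) (h1 : u < 4 * p) :
    (u : ℂ) ∉ (diagPair p q hp hq).lattice := by
  rw [mem_diagPair]
  rintro ⟨m, n, h⟩
  have hre := congrArg Complex.re h
  have him := congrArg Complex.im h
  simp at hre him
  have h4 : q * ((m : ℝ) - n) = 0 := by linarith
  have h6 := (mul_eq_zero.mp h4).resolve_left hq.ne'
  have hmn : (n : ℝ) = m := by linarith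
  rw [hmn] at hre
  have h7 : 4 * p * m = u := by linarith
  have a1 : (0 : ℝ) < m := by
    by_contra hc; push Not at hc; nlinarith
  have a2 : (m : ℝ) < 1 := by
    by_contra hc; push Not at hc; nlinarith
  have b1 : (0 : ℤ) < m := by exact_mod_cast a1
  have b2 : m < (1 : ℤ) := by exact_mod_cast a2
  omega

lemma four_mul_mem_diagPair : (4 * p : ℂ) ∈ (diagPair p q hp hq).lattice :=
  (mem_diagPair hp hq).mpr ⟨1, 1, by push_cast; ring⟩

/-- Complex conjugation on the lattice, which it preserves. -/
noncomputable def conjEquiv : (diagPair p q hp hq).lattice ≃ (diagPair p q hp hq).lattice :=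
  have h : ∀ x ∈ (diagPair p q hp hq).lattice,
      (starRingEnd ℂ) x ∈ (diagPair p q hp hq).lattice := by
    intro x hx
    obtain ⟨m, n, rfl⟩ := (mem_diagPair hp hq).mp hx
    refine (mem_diagPair hp hq).mpr ⟨n, m, ?_⟩
    simp [map_ofNat]
    ring
  { toFun := fun x => ⟨(starRingEnd ℂ) x, h _ x.2⟩
    invFun := fun x => ⟨(starRingEnd ℂ) x, h _ x.2⟩
    left_inv := fun x => by simp
    right_inv := fun x => by simp }

/-- Multiplication by `i` identifies the lattices attached to `(p, q)` and `(q, p)`. -/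
noncomputable def mulIEquiv : (diagPair p q hp hq).lattice ≃ (diagPair q p hq hp).lattice :=
  { toFun := fun x => ⟨Complex.I * x, by
      obtain ⟨m, n, h⟩ := (mem_diagPair hp hq).mp x.2
      refine (mem_diagPair hq hp).mpr ⟨n, -m, ?_⟩
      rw [← h]; push_cast; linear_combination (2 * q * (n - m)) * Complex.I_sq⟩
    invFun := fun x => ⟨-Complex.I * x, by
      obtain ⟨m, n, h⟩ := (mem_diagPair hq hp).mp x.2
      refine (mem_diagPair hp hq).mpr ⟨-n, m, ?_⟩
      rw [← h]; push_cast; linear_combination (2 * p * (m - n)) * Complex.I_sq⟩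
    left_inv := fun x => by
      ext; simp [← mul_assoc]
    right_inv := fun x => by
      ext; simp [← mul_assoc] }

lemma conj_weierstrassP (z : ℂ) :
    (starRingEnd ℂ) ((diagPair p q hp hq).weierstrassP z) =
      (diagPair p q hp hq).weierstrassP ((starRingEnd ℂ) z) := by
  unfold PeriodPair.weierstrassP
  rw [Complex.conj_tsum, ← (conjEquiv hp hq).tsum_eq]
  simp [conjEquiv]

lemma conj_derivWeierstrassP (z : ℂ) :
    (starRingEnd ℂ) ((diagPair p q hp hq).derivWeierstrassP z) =
      (diagPair p q hp hq).derivWeierstrassP ((starRingEnd ℂ) z) := by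
  unfold PeriodPair.derivWeierstrassP
  rw [map_neg, Complex.conj_tsum, ← (conjEquiv hp hq).tsum_eq]
  simp [conjEquiv, map_ofNat]

lemma conj_G (n : ℕ) :
    (starRingEnd ℂ) ((diagPair p q hp hq).G n) = (diagPair p q hp hq).G n := by
  unfold PeriodPair.G
  rw [Complex.conj_tsum, ← (conjEquiv hp hq).tsum_eq]
  simp [conjEquiv]

lemma G_four_swap : (diagPair q p hq hp).G 4 = (diagPair p q hp hq).G 4 := by
  unfold PeriodPair.G
  rw [← (mulIEquiv hp hq).tsum_eq]
  simp [mulIEquiv, mul_pow]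

lemma weierstrassP_swap (z : ℂ) : (diagPair q p hq hp).weierstrassP (Complex.I * z) =
    - (diagPair p q hp hq).weierstrassP z := by
  unfold PeriodPair.weierstrassP
  rw [← (mulIEquiv hp hq).tsum_eq, ← tsum_neg]
  congr with l
  simp only [mulIEquiv, Equiv.coe_fn_mk, ← mul_sub, mul_pow, Complex.I_sq]
  simp [neg_add_eq_sub, inv_neg]

/-- Multiplication by `i` sends `2p` to `2pi`, which is congruent to `2q` modulo the lattice of
`(q, p)`. -/
lemma weierstrassP_half_swap : (diagPair q p hq hp).weierstrassP (2 * q) =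
    - (diagPair p q hp hq).weierstrassP (2 * p) := by
  have h := weierstrassP_swap hp hq (2 * p)
  have h2 := (diagPair q p hq hp).weierstrassP_sub_coe (2 * q)
    ⟨_, (diagPair q p hq hp).ω₂_mem_lattice⟩
  rw [← h2, ← h]
  congr 1
  simp only [diagPair]
  ring

end Lattice

section PeriodPair
variable (L : PeriodPair)

lemma hasDerivAt_weierstrassP {z : ℂ} (hz : z ∉ L.lattice) :
    HasDerivAt L.weierstrassP (L.derivWeierstrassP z) z := by
  rw [← L.deriv_weierstrassP]
  exact (L.analyticOnNhd_weierstrassP z hz).differentiableAt.hasDerivAt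

/-- The double pole of `℘` at a lattice point, with leading coefficient `1`. -/
lemma tendsto_sq_mul_weierstrassP {l : ℂ} (hl : l ∈ L.lattice) :
    Filter.Tendsto (fun z => (z - l) ^ 2 * L.weierstrassP z) (nhdsWithin l {l}ᶜ) (nhds 1) := by
  have hc : ContinuousAt (L.weierstrassPExcept l) l :=
    (L.analyticAt_weierstrassPExcept l).continuousAt
  have h1 : ContinuousAt (fun z => (z - l) ^ 2 * L.weierstrassPExcept l z + 1 - (z - l) ^ 2 / l ^ 2)
      l := by fun_prop
  have h2 := h1.tendsto.mono_left (nhdsWithin_le_nhds (s := {l}ᶜ))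
  simp only [sub_self, ne_eq, OfNat.ofNat_ne_zero, not_false_eq_true, zero_pow, zero_mul,
    zero_add, zero_div, sub_zero] at h2
  refine h2.congr' ?_
  filter_upwards [self_mem_nhdsWithin] with z hz
  rw [← L.ite_eq_one_sub_sq_mul_weierstrassP l hl z, if_neg (show z ≠ l from hz)]

lemma not_eventually_derivWeierstrassP_eq_zero {z : ℂ} (hz : z ∉ L.lattice) :
    ¬ ∀ᶠ w in nhds z, L.derivWeierstrassP w = 0 := by
  intro h
  have hconn : IsPreconnected (L.lattice : Set ℂ)ᶜ := by
    have hcount : (L.lattice : Set ℂ).Countable := by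
      have : Countable L.lattice := L.latticeEquivProd.toEquiv.countable_iff.mpr inferInstance
      exact Set.to_countable _
    exact (hcount.isPathConnected_compl_of_one_lt_rank
      (by simp)).isConnected.isPreconnected
  have h0 : Set.EqOn L.derivWeierstrassP 0 (L.lattice : Set ℂ)ᶜ :=
    L.analyticOnNhd_derivWeierstrassP.eqOn_zero_of_preconnected_of_eventuallyEq_zero hconn hz h
  have hopen : IsOpen (L.lattice : Set ℂ)ᶜ := L.isClosed_lattice.isOpen_compl
  have hconst : ∀ w ∈ (L.lattice : Set ℂ)ᶜ, L.weierstrassP w = L.weierstrassP z := fun w hw =>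
    hopen.is_const_of_deriv_eq_zero hconn L.differentiableOn_weierstrassP
      (by rw [L.deriv_weierstrassP]; exact h0) hw hz
  have ht := tendsto_sq_mul_weierstrassP L (l := 0) (zero_mem _)
  have ht' : Filter.Tendsto (fun w : ℂ => (w - 0) ^ 2 * L.weierstrassP z)
      (nhdsWithin 0 {0}ᶜ) (nhds 0) := by
    have : Continuous (fun w : ℂ => (w - 0) ^ 2 * L.weierstrassP z) := by fun_prop
    simpa using (this.tendsto 0).mono_left (nhdsWithin_le_nhds (s := {0}ᶜ))
  have hev : ∀ᶠ w in nhdsWithin (0 : ℂ) {0}ᶜ, w ∉ L.lattice := by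
    have := L.compl_lattice_sdiff_singleton_mem_nhds 0
    filter_upwards [nhdsWithin_le_nhds this, self_mem_nhdsWithin] with w h1 h2 h3
    exact h1 ⟨h3, h2⟩
  have := tendsto_nhds_unique (ht'.congr' (hev.mono fun w hw => by rw [hconst w hw])) ht
  exact zero_ne_one this

/-- `℘'' = 6℘² - g₂/2`: differentiate `℘'² = 4℘³ - g₂℘ - g₃` and cancel `℘'`, whose zeros are
isolated. -/
lemma hasDerivAt_derivWeierstrassP {z : ℂ} (hz : z ∉ L.lattice) :
    HasDerivAt L.derivWeierstrassP (6 * L.weierstrassP z ^ 2 - L.g₂ / 2) z := by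
  have hopen : IsOpen (L.lattice : Set ℂ)ᶜ := L.isClosed_lattice.isOpen_compl
  have hd : ∀ w ∉ L.lattice, HasDerivAt L.derivWeierstrassP (deriv L.derivWeierstrassP w) w :=
    fun w hw => (L.analyticOnNhd_derivWeierstrassP w hw).differentiableAt.hasDerivAt
  have hmul : ∀ w ∉ L.lattice, L.derivWeierstrassP w *
      (deriv L.derivWeierstrassP w - (6 * L.weierstrassP w ^ 2 - L.g₂ / 2)) = 0 := by
    intro w hw
    have h1 := (hd w hw).pow 2
    have hP := hasDerivAt_weierstrassP L hw
    have h2 := (((hP.pow 3).const_mul 4).sub (hP.const_mul L.g₂)).sub_const L.g₃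
    have heq : (L.derivWeierstrassP ^ 2) =ᶠ[nhds w] fun w =>
        4 * L.weierstrassP w ^ 3 - L.g₂ * L.weierstrassP w - L.g₃ := by
      filter_upwards [hopen.mem_nhds hw] with x hx
      exact L.derivWeierstrassP_sq x hx
    have h3 := h1.unique (h2.congr_of_eventuallyEq heq)
    simp at h3
    linear_combination h3 / 2
  have hfc : ContinuousAt (fun w => deriv L.derivWeierstrassP w -
      (6 * L.weierstrassP w ^ 2 - L.g₂ / 2)) z := by
    have h1 := (L.analyticOnNhd_derivWeierstrassP z hz).deriv.continuousAt
    have h2 := (L.analyticOnNhd_weierstrassP z hz).continuousAt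
    fun_prop
  have hne := (L.analyticOnNhd_derivWeierstrassP z hz).eventually_eq_zero_or_eventually_ne_zero
    |>.resolve_left (not_eventually_derivWeierstrassP_eq_zero L hz)
  have h0 : ∀ᶠ w in nhdsWithin z {z}ᶜ, deriv L.derivWeierstrassP w -
      (6 * L.weierstrassP w ^ 2 - L.g₂ / 2) = 0 := by
    filter_upwards [hne, nhdsWithin_le_nhds (hopen.mem_nhds hz)] with w h1 h2
    exact (mul_eq_zero.mp (hmul w h2)).resolve_left h1
  have h4 := tendsto_nhds_unique (tendsto_const_nhds.congr' (h0.mono fun _ h => h.symm))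
    (hfc.tendsto.mono_left (nhdsWithin_le_nhds (s := {z}ᶜ)))
  have h5 := hd z hz
  rwa [show deriv L.derivWeierstrassP z = 6 * L.weierstrassP z ^ 2 - L.g₂ / 2 from
    by linear_combination -h4] at h5

end PeriodPair

/-! ### The Weierstrass function along the real axis -/

section HalfPeriod

variable {p q : ℝ} (hp : 0 < p) (hq : 0 < q)

lemma weierstrassP_ofReal (u : ℝ) : (diagPair p q hp hq).weierstrassP u =
    (((diagPair p q hp hq).weierstrassP u).re : ℂ) := by
  refine (Complex.conj_eq_iff_re.mp ?_).symm
  rw [conj_weierstrassP, Complex.conj_ofReal]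

lemma derivWeierstrassP_ofReal (u : ℝ) : (diagPair p q hp hq).derivWeierstrassP u =
    (((diagPair p q hp hq).derivWeierstrassP u).re : ℂ) := by
  refine (Complex.conj_eq_iff_re.mp ?_).symm
  rw [conj_derivWeierstrassP, Complex.conj_ofReal]

lemma g₂_ofReal : (diagPair p q hp hq).g₂ = (((diagPair p q hp hq).g₂).re : ℂ) := by
  refine (Complex.conj_eq_iff_re.mp ?_).symm
  unfold PeriodPair.g₂
  rw [map_mul, conj_G, map_ofNat]

/-- `℘'` is odd and `2p ≡ -2p` modulo the lattice. -/
lemma derivWeierstrassP_half : (diagPair p q hp hq).derivWeierstrassP (2 * p) = 0 := by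
  have h1 := (diagPair p q hp hq).derivWeierstrassP_neg (2 * p)
  have h2 := (diagPair p q hp hq).derivWeierstrassP_add_coe (-(2 * p))
    ⟨_, four_mul_mem_diagPair hp hq⟩
  rw [h1] at h2
  rw [show -(2 * (p : ℂ)) + 4 * p = 2 * p by ring] at h2
  have : 2 * (diagPair p q hp hq).derivWeierstrassP (2 * p) = 0 := by linear_combination h2
  simpa using this

/-- The coefficient `A = 3 ℘(2p)` of `y'² = 4y(y² + Ay + B)`, the equation satisfied by
`y(u) = ℘(u + 2p) - ℘(2p)`; the value `℘(2p)` is real, so nothing is lost in taking real parts. -/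
noncomputable def coeffA : ℝ := 3 * ((diagPair p q hp hq).weierstrassP (2 * p)).re

/-- The coefficient `B = 3 ℘(2p)² - g₂/4` of `y'² = 4y(y² + Ay + B)`. -/
noncomputable def coeffB : ℝ :=
  3 * ((diagPair p q hp hq).weierstrassP (2 * p)).re ^ 2 - (diagPair p q hp hq).g₂.re / 4

/-- The function `u ↦ ℘(u + 2p) - ℘(2p)` on the real line. -/
noncomputable def shiftedP (u : ℝ) : ℝ :=
  ((diagPair p q hp hq).weierstrassP (u + 2 * p)).re -
    ((diagPair p q hp hq).weierstrassP (2 * p)).re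

/-- The function `u ↦ ℘'(u + 2p)` on the real line. -/
noncomputable def shiftedP' (u : ℝ) : ℝ := ((diagPair p q hp hq).derivWeierstrassP (u + 2 * p)).re

lemma weierstrassP_half : (diagPair p q hp hq).weierstrassP (2 * p) =
    (((diagPair p q hp hq).weierstrassP (2 * p)).re : ℂ) := by
  have := weierstrassP_ofReal hp hq (2 * p)
  push_cast at this
  exact this

lemma weierstrassP_shift (u : ℝ) : (diagPair p q hp hq).weierstrassP (u + 2 * p) =
    (((diagPair p q hp hq).weierstrassP (u + 2 * p)).re : ℂ) := by
  have := weierstrassP_ofReal hp hq (u + 2 * p)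
  push_cast at this
  exact this

lemma derivWeierstrassP_shift (u : ℝ) : (diagPair p q hp hq).derivWeierstrassP (u + 2 * p) =
    (((diagPair p q hp hq).derivWeierstrassP (u + 2 * p)).re : ℂ) := by
  have := derivWeierstrassP_ofReal hp hq (u + 2 * p)
  push_cast at this
  exact this

lemma shift_notMem {u : ℝ} (hu : u ∈ Set.Ioo (-(2 * p)) (2 * p)) :
    (u + 2 * p : ℂ) ∉ (diagPair p q hp hq).lattice := by
  have := ofReal_notMem_diagPair (p := p) hp hq (u := u + 2 * p) (by linarith [hu.1])
    (by linarith [hu.2])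
  push_cast at this
  exact this

lemma two_mul_notMem : (2 * p : ℂ) ∉ (diagPair p q hp hq).lattice := by
  have := shift_notMem hp hq (u := 0) ⟨by linarith, by linarith⟩
  simpa using this

lemma shiftedP_zero : shiftedP hp hq 0 = 0 := by simp [shiftedP]

lemma hasDerivAt_shiftedP {u : ℝ} (hu : u ∈ Set.Ioo (-(2 * p)) (2 * p)) :
    HasDerivAt (shiftedP hp hq) (shiftedP' hp hq u) u := by
  have h := (hasDerivAt_weierstrassP _ (shift_notMem hp hq hu)).comp_add_const (u : ℂ) (2 * p : ℂ)
  exact h.real_of_complex.sub_const _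

lemma hasDerivAt_shiftedP' {u : ℝ} (hu : u ∈ Set.Ioo (-(2 * p)) (2 * p)) :
    HasDerivAt (shiftedP' hp hq) (6 * shiftedP hp hq u ^ 2 + 4 * coeffA hp hq * shiftedP hp hq u
      + 2 * coeffB hp hq) u := by
  have h := (hasDerivAt_derivWeierstrassP _ (shift_notMem hp hq hu)).comp_add_const
    (u : ℂ) (2 * p : ℂ)
  refine h.real_of_complex.congr_deriv ?_
  rw [weierstrassP_shift, g₂_ofReal]
  simp only [shiftedP, coeffA, coeffB]
  norm_cast
  ring

lemma shiftedP'_sq {u : ℝ} (hu : u ∈ Set.Ioo (-(2 * p)) (2 * p)) :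
    shiftedP' hp hq u ^ 2 = 4 * shiftedP hp hq u *
      (shiftedP hp hq u ^ 2 + coeffA hp hq * shiftedP hp hq u + coeffB hp hq) := by
  have h := (diagPair p q hp hq).derivWeierstrassP_sq _ (shift_notMem hp hq hu)
  have h0 := (diagPair p q hp hq).derivWeierstrassP_sq _ (two_mul_notMem hp hq)
  rw [derivWeierstrassP_half] at h0
  have h1 : (diagPair p q hp hq).derivWeierstrassP (u + 2 * p) ^ 2 =
      4 * ((diagPair p q hp hq).weierstrassP (u + 2 * p) ^ 3 -
        (diagPair p q hp hq).weierstrassP (2 * p) ^ 3) - (diagPair p q hp hq).g₂ *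
        ((diagPair p q hp hq).weierstrassP (u + 2 * p) -
          (diagPair p q hp hq).weierstrassP (2 * p)) := by
    linear_combination h - h0
  rw [weierstrassP_shift, weierstrassP_half, derivWeierstrassP_shift, g₂_ofReal] at h1
  have h2 : shiftedP' hp hq u ^ 2 =
      4 * (((diagPair p q hp hq).weierstrassP (u + 2 * p)).re ^ 3 -
        ((diagPair p q hp hq).weierstrassP (2 * p)).re ^ 3) - (diagPair p q hp hq).g₂.re *
        (((diagPair p q hp hq).weierstrassP (u + 2 * p)).re -
          ((diagPair p q hp hq).weierstrassP (2 * p)).re) := by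
    unfold shiftedP'
    exact_mod_cast h1
  rw [h2]
  simp only [shiftedP, coeffA, coeffB]
  ring

lemma tendsto_shiftedP :
    Filter.Tendsto (shiftedP hp hq) (nhdsWithin (2 * p) (Set.Iio (2 * p))) Filter.atTop := by
  have h1 := tendsto_sq_mul_weierstrassP _ (four_mul_mem_diagPair hp hq)
  have h2 : Filter.Tendsto (fun u : ℝ => (u + 2 * p : ℂ)) (nhdsWithin (2 * p) (Set.Iio (2 * p)))
      (nhdsWithin (4 * p) {(4 * p : ℂ)}ᶜ) := by
    refine tendsto_nhdsWithin_iff.mpr ⟨?_, ?_⟩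
    · have : Continuous (fun u : ℝ => (u + 2 * p : ℂ)) := by fun_prop
      have h := (this.tendsto (2 * p)).mono_left (nhdsWithin_le_nhds (s := Set.Iio (2 * p)))
      convert! h using 2
      push_cast; ring
    · filter_upwards [self_mem_nhdsWithin] with u (hu : u < 2 * p)
      intro h
      have h' : ((u + 2 * p : ℝ) : ℂ) = ((4 * p : ℝ) : ℂ) := by
        push_cast; exact h
      have := Complex.ofReal_injective h'
      linarith
  have h3 := (Complex.continuous_re.tendsto _).comp (h1.comp h2)
  have h4 : Filter.Tendsto (fun u : ℝ => (u - 2 * p) ^ 2 *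
      ((diagPair p q hp hq).weierstrassP (u + 2 * p)).re)
      (nhdsWithin (2 * p) (Set.Iio (2 * p))) (nhds 1) := by
    rw [Complex.one_re] at h3
    refine h3.congr fun u => ?_
    simp only [Function.comp]
    rw [show ((u : ℂ) + 2 * p - 4 * p) ^ 2 = (((u - 2 * p) ^ 2 : ℝ) : ℂ) by push_cast; ring,
      Complex.re_ofReal_mul]
  have h5 : Filter.Tendsto (fun u : ℝ => ((u - 2 * p) ^ 2)⁻¹)
      (nhdsWithin (2 * p) (Set.Iio (2 * p))) Filter.atTop := by
    refine Filter.Tendsto.inv_tendsto_nhdsGT_zero (tendsto_nhdsWithin_iff.mpr ⟨?_, ?_⟩)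
    · have : Continuous (fun u : ℝ => (u - 2 * p) ^ 2) := by fun_prop
      simpa using (this.tendsto (2 * p)).mono_left (nhdsWithin_le_nhds (s := Set.Iio (2 * p)))
    · filter_upwards [self_mem_nhdsWithin] with u (hu : u < 2 * p)
      have : u - 2 * p ≠ 0 := by linarith
      exact Set.mem_Ioi.mpr (by positivity)
  have h6 := h5.atTop_mul_pos one_pos h4
  have h7 : Filter.Tendsto (fun u : ℝ => ((diagPair p q hp hq).weierstrassP (u + 2 * p)).re)
      (nhdsWithin (2 * p) (Set.Iio (2 * p))) Filter.atTop := by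
    refine h6.congr' ?_
    filter_upwards [self_mem_nhdsWithin] with u (hu : u < 2 * p)
    have : u - 2 * p ≠ 0 := by linarith
    field_simp
  exact Filter.tendsto_atTop_add_const_right _ _ h7

lemma coeffA_swap : coeffA hq hp = - coeffA hp hq := by
  unfold coeffA
  rw [weierstrassP_half_swap hp hq, Complex.neg_re]
  ring

lemma coeffB_swap : coeffB hq hp = coeffB hp hq := by
  unfold coeffB PeriodPair.g₂
  rw [weierstrassP_half_swap hp hq, G_four_swap hp hq, Complex.neg_re]
  ring

lemma coeff_pos : 0 < coeffB hp hq ∧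
    ∀ s, 0 < s → 0 < s ^ 2 + coeffA hp hq * s + coeffB hp hq :=
  ode_coeff (p := 2 * p) (by linarith) (fun _ h => hasDerivAt_shiftedP hp hq h)
    (fun _ h => hasDerivAt_shiftedP' hp hq h) (fun _ h => shiftedP'_sq hp hq h)
    (shiftedP_zero hp hq) (tendsto_shiftedP hp hq)

/-- The real half period `2p` as an elliptic integral. -/
lemma ellipticK_coeff {κ b : ℝ} (hb : 0 < b) (hκ : κ ^ 2 < 1)
    (hA : coeffA hp hq = (2 - 4 * κ ^ 2) * b) (hB : coeffB hp hq = b ^ 2) :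
    ellipticK κ = 2 * Real.sqrt b * p := by
  have h2p : 0 < 2 * p := by linarith
  obtain ⟨h1, h2⟩ := ode_pos h2p (fun _ h => hasDerivAt_shiftedP hp hq h)
    (fun _ h => hasDerivAt_shiftedP' hp hq h) (shiftedP_zero hp hq) (tendsto_shiftedP hp hq)
  have hsub : Set.Ioo 0 (2 * p) ⊆ Set.Ioo (-(2 * p)) (2 * p) :=
    Set.Ioo_subset_Ioo_left (by linarith)
  have h := ellipticK_of_ode h2p hb hκ (fun _ h => hasDerivAt_shiftedP hp hq (hsub h)) h1 h2
    (fun t h => by rw [shiftedP'_sq hp hq (hsub h), hA, hB])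
    (by
      have := (hasDerivAt_shiftedP hp hq (u := 0) ⟨by linarith, h2p⟩).continuousAt.tendsto
      rw [shiftedP_zero] at this
      exact this.mono_left nhdsWithin_le_nhds)
    (tendsto_shiftedP hp hq)
  rw [h]; ring

end HalfPeriod

/-- For `p = K(k)`, `q = K(k')`, the equation is `y'² = 4y(y² + Ay + B)` with `A = (1 - 2k²)/2`,
`B = 1/16`. The discriminant `A² - 4B` is negative, so `A = (2 - 4κ²)b`, `B = b²` for some `b > 0`
and some modulus `κ`; then `K(κ) = 2√b p` and, exchanging `p` and `q` (which turns `A` into `-A`),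
`K(κ') = 2√b q`. Comparing ratios gives `κ = k` and `2√b = 1`. -/
lemma coeff_values {k k' : ℝ} (hk0 : 0 < k ^ 2) (hk1 : k ^ 2 < 1) (hk' : k' ^ 2 = 1 - k ^ 2)
    (hp : 0 < ellipticK k) (hq : 0 < ellipticK k') :
    coeffA hp hq = (1 - 2 * k ^ 2) / 2 ∧ coeffB hp hq = 1 / 16 := by
  obtain ⟨hB, h1⟩ := coeff_pos hp hq
  obtain ⟨-, h2⟩ := coeff_pos hq hp
  rw [coeffA_swap hp hq, coeffB_swap hp hq] at h2
  have hA := coeffA_swap hp hq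
  have hBs := coeffB_swap hp hq
  set A := coeffA hp hq
  set B := coeffB hp hq
  have hdisc : A ^ 2 < 4 * B := by
    rcases lt_trichotomy A 0 with h | h | h
    · nlinarith [h1 (-A / 2) (by linarith)]
    · rw [h]; linarith
    · nlinarith [h2 (A / 2) (by linarith)]
  set b := Real.sqrt B with hb
  have hb0 : 0 < b := Real.sqrt_pos.mpr hB
  have hbB : B = b ^ 2 := (Real.sq_sqrt hB.le).symm
  have habs : |A| < 2 * b := abs_lt_of_sq_lt_sq (by nlinarith) (by linarith)
  obtain ⟨hA1, hA2⟩ := abs_lt.mp habs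
  have hd1 : A / b < 2 := by rw [div_lt_iff₀ hb0]; exact hA2
  have hd2 : -2 < A / b := by rw [lt_div_iff₀ hb0]; linarith
  have hκ : Real.sqrt ((2 - A / b) / 4) ^ 2 = (2 - A / b) / 4 := Real.sq_sqrt (by linarith)
  have hκ' : Real.sqrt ((2 + A / b) / 4) ^ 2 = (2 + A / b) / 4 := Real.sq_sqrt (by linarith)
  have e1 := ellipticK_coeff hp hq (κ := Real.sqrt ((2 - A / b) / 4)) hb0 (by linarith)
    (by rw [hκ]; change A = _; field_simp; ring) hbB
  have e2 := ellipticK_coeff hq hp (κ := Real.sqrt ((2 + A / b) / 4)) hb0 (by linarith)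
    (by rw [hκ', hA]; field_simp; ring) (hBs.trans hbB)
  obtain ⟨r1, r2⟩ := ellipticK_eq_of_ratio hk0 hk1 (by rw [hκ]; linarith) (by linarith) hk'
    (by rw [hκ, hκ']; ring) e1 e2
  have hb4 : b = 1 / 4 := by
    have := Real.sq_sqrt hb0.le
    rw [show Real.sqrt b = 1 / 2 by linarith] at this
    linarith
  rw [hκ] at r1
  refine ⟨?_, by rw [hbB, hb4]; norm_num⟩
  have : A = A / b * b := by field_simp
  rw [this, hb4]
  rw [hb4] at r1
  linarith

/-! ### Derivatives at the half period -/

section TaylorCoefficients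

variable {p q : ℝ} (hp : 0 < p) (hq : 0 < q)

/-- The `n`-th derivative at the half period `2p` of `℘ - ℘(2p)`. -/
noncomputable def halfDeriv (n : ℕ) : ℂ :=
  iteratedDeriv n (fun z => (diagPair p q hp hq).weierstrassP z -
    (diagPair p q hp hq).weierstrassP (2 * p)) (2 * p)

lemma halfDeriv_zero : halfDeriv hp hq 0 = 0 := by simp [halfDeriv]

lemma halfDeriv_one : halfDeriv hp hq 1 = 0 := by
  rw [halfDeriv, iteratedDeriv_one, deriv_sub_const,
    (hasDerivAt_weierstrassP _ (two_mul_notMem hp hq)).deriv, derivWeierstrassP_half]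

/-- The positive-order derivatives are lattice sums, by termwise differentiation of `℘`. -/
lemma halfDeriv_eq_sumInvPow (n : ℕ) : halfDeriv hp hq (n + 1) =
    ((n + 2).factorial : ℂ) * (diagPair p q hp hq).sumInvPow (2 * p) (n + 3) := by
  have h := (diagPair p q hp hq).iteratedDeriv_weierstrassPExcept_self (2 * p) (n := n + 1)
  rw [(diagPair p q hp hq).weierstrassPExcept_of_notMem _ (two_mul_notMem hp hq)] at h
  rw [halfDeriv, iteratedDeriv_succ']
  simp only [deriv_sub_const_fun]
  rw [← iteratedDeriv_succ', h]
  simp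

/-- The `n`-th derivative of `f'' = 6f² + 4Af + 2B`, `f = ℘ - ℘(2p)`, at `2p`, by the Leibniz rule. -/
lemma halfDeriv_rec (n : ℕ) : halfDeriv hp hq (n + 2) =
    6 * ∑ i ∈ Finset.range (n + 1), (n.choose i : ℂ) * halfDeriv hp hq i * halfDeriv hp hq (n - i)
      + 4 * coeffA hp hq * halfDeriv hp hq n + (if n = 0 then 2 * (coeffB hp hq : ℂ) else 0) := by
  set L := diagPair p q hp hq with hL
  set f : ℂ → ℂ := fun z => L.weierstrassP z - L.weierstrassP (2 * p) with hf
  have hopen : IsOpen (L.lattice : Set ℂ)ᶜ := L.isClosed_lattice.isOpen_compl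
  have hmem : (2 * p : ℂ) ∈ (L.lattice : Set ℂ)ᶜ := two_mul_notMem hp hq
  have hA : (coeffA hp hq : ℂ) = 3 * L.weierstrassP (2 * p) := by
    rw [weierstrassP_half]; simp [coeffA]
  have hB : (coeffB hp hq : ℂ) = 3 * L.weierstrassP (2 * p) ^ 2 - L.g₂ / 4 := by
    rw [weierstrassP_half, g₂_ofReal]; simp [coeffB]
  have hode : deriv (deriv f) =ᶠ[nhds (2 * p : ℂ)]
      ((fun z => 6 * (f z * f z)) + fun z => 4 * (coeffA hp hq : ℂ) * f z) +
        fun _ => 2 * (coeffB hp hq : ℂ) := by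
    filter_upwards [hopen.mem_nhds hmem] with z hz
    have h1 : deriv f =ᶠ[nhds z] L.derivWeierstrassP := by
      filter_upwards [hopen.mem_nhds hz] with w hw
      exact ((hasDerivAt_weierstrassP L hw).sub_const _).deriv
    rw [h1.deriv_eq, (hasDerivAt_derivWeierstrassP L hz).deriv]
    simp only [Pi.add_apply, hf, hA, hB]
    ring
  have han : AnalyticAt ℂ f (2 * p) := by
    have := L.analyticAt_weierstrassPExcept (2 * p)
    rw [L.weierstrassPExcept_of_notMem _ hmem] at this
    exact this.sub analyticAt_const
  have hc : ContDiffAt ℂ n f (2 * p) := han.contDiffAt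
  have h0 : halfDeriv hp hq (n + 2) = iteratedDeriv n (deriv (deriv f)) (2 * p) := by
    rw [halfDeriv, iteratedDeriv_succ', iteratedDeriv_succ']
  rw [h0, Filter.EventuallyEq.iteratedDeriv_eq n hode, iteratedDeriv_add, iteratedDeriv_add,
    iteratedDeriv_const_mul_field, iteratedDeriv_const_mul_field, iteratedDeriv_fun_mul hc hc,
    iteratedDeriv_const]
  · rfl
  · fun_prop
  · fun_prop
  · exact ContDiffAt.add (by fun_prop) (by fun_prop)
  · fun_prop

lemma halfDeriv_six : halfDeriv hp hq 6 =
    ((144 * coeffB hp hq ^ 2 + 32 * coeffA hp hq ^ 2 * coeffB hp hq : ℝ) : ℂ) := by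
  have h2 := halfDeriv_rec hp hq 0
  have h3 := halfDeriv_rec hp hq 1
  have h4 := halfDeriv_rec hp hq 2
  have h6 := halfDeriv_rec hp hq 4
  norm_num [Finset.sum_range_succ, halfDeriv_zero, halfDeriv_one, Nat.choose] at h2 h3 h4 h6
  rw [h6, h4, h2]
  push_cast
  ring

lemma halfDeriv_rat {a b : ℚ} (ha : (a : ℝ) = coeffA hp hq) (hb : (b : ℝ) = coeffB hp hq) (n : ℕ) :
    ∃ r : ℚ, (r : ℂ) = halfDeriv hp hq n := by
  induction n using Nat.strong_induction_on with
  | _ n ih =>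
    match n with
    | 0 => exact ⟨0, by simp [halfDeriv_zero]⟩
    | 1 => exact ⟨0, by simp [halfDeriv_one]⟩
    | n + 2 =>
      have hex : ∀ m, ∃ r : ℚ, m < n + 2 → (r : ℂ) = halfDeriv hp hq m := by
        intro m
        by_cases hm : m < n + 2
        · obtain ⟨r, hr⟩ := ih m hm
          exact ⟨r, fun _ => hr⟩
        · exact ⟨0, fun h => absurd h hm⟩
      choose d hd using hex
      refine ⟨6 * ∑ i ∈ Finset.range (n + 1), (n.choose i : ℚ) * d i * d (n - i)
        + 4 * a * d n + (if n = 0 then 2 * b else 0), ?_⟩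
      rw [halfDeriv_rec, ← hd n (by omega), ← ha, ← hb]
      push_cast
      congr 1
      · congr 2
        refine Finset.sum_congr rfl fun i hi => ?_
        rw [Finset.mem_range] at hi
        rw [hd i (by omega), hd (n - i) (by omega)]
      · split_ifs <;> simp

end TaylorCoefficients

/-! ### Moments as double series -/

section Moments

lemma norm_pow_mul_exp (N : ℕ) (c : ℂ) {t : ℝ} (ht : 0 < t) :
    ‖(t : ℂ) ^ N * Complex.exp (-c * t)‖ = t ^ N * Real.exp (-c.re * t) := by
  rw [norm_mul, norm_pow, Complex.norm_exp, Complex.norm_real, Real.norm_of_nonneg ht.le]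
  simp

lemma integrableOn_pow_mul_exp_real (N : ℕ) {b : ℝ} (hb : 0 < b) :
    IntegrableOn (fun t : ℝ => t ^ N * Real.exp (-b * t)) (Set.Ioi 0) := by
  have h := integrableOn_rpow_mul_exp_neg_mul_rpow (p := 1) (s := N) (b := b)
    (by have : (0 : ℝ) ≤ N := Nat.cast_nonneg N
        linarith) one_pos hb
  simpa using h

lemma integrableOn_pow_mul_exp (N : ℕ) {c : ℂ} (hc : 0 < c.re) :
    IntegrableOn (fun t : ℝ => (t : ℂ) ^ N * Complex.exp (-c * t)) (Set.Ioi 0) := by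
  refine (integrableOn_pow_mul_exp_real N hc).mono'
    (by fun_prop) ?_
  filter_upwards [ae_restrict_mem measurableSet_Ioi] with t ht
  exact (norm_pow_mul_exp N c ht).le

/-- The integral of Euler for complex `c` in the right half plane, by repeated integration by parts. -/
lemma integral_pow_mul_exp (N : ℕ) {c : ℂ} (hc : 0 < c.re) :
    ∫ t in Set.Ioi (0 : ℝ), (t : ℂ) ^ N * Complex.exp (-c * t) =
      (N.factorial : ℂ) / c ^ (N + 1) := by
  have hc0 : c ≠ 0 := by rintro rfl; simp at hc
  induction N with
  | zero =>
    have h := integral_exp_mul_complex_Ioi (a := -c) (by simpa using hc) 0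
    simpa using h
  | succ N ih =>
    have hd : ∀ t ∈ Set.Ici (0 : ℝ), HasDerivAt
        (fun t : ℝ => -((t : ℂ) ^ (N + 1) * Complex.exp (-c * t)) / c)
        ((t : ℂ) ^ (N + 1) * Complex.exp (-c * t)
          - ((N + 1 : ℕ) : ℂ) / c * ((t : ℂ) ^ N * Complex.exp (-c * t))) t := by
      intro t _
      have h1 : HasDerivAt (fun z : ℂ => -(z ^ (N + 1) * Complex.exp (-c * z)) / c)
          ((t : ℂ) ^ (N + 1) * Complex.exp (-c * t)
          - ((N + 1 : ℕ) : ℂ) / c * ((t : ℂ) ^ N * Complex.exp (-c * t))) (t : ℂ) := by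
        have h2 := ((hasDerivAt_pow (N + 1) (t : ℂ)).mul
          (((hasDerivAt_id (t : ℂ)).const_mul (-c)).cexp)).neg.div_const c
        refine h2.congr_deriv ?_
        simp
        field_simp
        ring
      exact h1.comp_ofReal
    have hlim : Filter.Tendsto (fun t : ℝ => -((t : ℂ) ^ (N + 1) * Complex.exp (-c * t)) / c)
        Filter.atTop (nhds 0) := by
      have h1 : Filter.Tendsto (fun t : ℝ => (t : ℂ) ^ (N + 1) * Complex.exp (-c * t))
          Filter.atTop (nhds 0) := by
        rw [tendsto_zero_iff_norm_tendsto_zero]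
        refine (tendsto_rpow_mul_exp_neg_mul_atTop_nhds_zero (N + 1 : ℕ) c.re hc).congr' ?_
        filter_upwards [Filter.eventually_gt_atTop 0] with t ht
        rw [norm_pow_mul_exp _ _ ht, Real.rpow_natCast]
      simpa using h1.neg.div_const c
    have hi1 := integrableOn_pow_mul_exp (N + 1) hc
    have hi2 := (integrableOn_pow_mul_exp N hc).const_mul (((N + 1 : ℕ) : ℂ) / c)
    have h := integral_Ioi_of_hasDerivAt_of_tendsto' hd (hi1.sub hi2) hlim
    rw [integral_sub hi1 hi2, integral_const_mul, ih] at h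
    have h' := sub_eq_iff_eq_add.mp h
    rw [h', Nat.factorial_succ]
    push_cast
    field_simp
    simp
    ring

/-- The frequencies in the exponential expansion of `1 / (cosh (q t) - cos (p t))`. -/
noncomputable def freq (p q : ℝ) (rs : ℕ × ℕ) : ℂ :=
  (rs.1 + rs.2 + 1) * q - (rs.1 - rs.2) * p * Complex.I

lemma freq_re (p q : ℝ) (rs : ℕ × ℕ) : (freq p q rs).re = (rs.1 + rs.2 + 1) * q := by
  simp [freq]

lemma freq_re_pos (p : ℝ) {q : ℝ} (hq : 0 < q) (rs : ℕ × ℕ) : 0 < (freq p q rs).re := by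
  rw [freq_re]; positivity

/-- Writing `w = exp (-(q - p i) t)`, one has
`cosh (q t) - cos (p t) = exp (q t) (1 - w) (1 - w̄) / 2`, and both factors are inverted by geometric series. -/
lemma hasSum_inv_cosh_sub_cos (p : ℝ) {q : ℝ} (hq : 0 < q) {t : ℝ} (ht : 0 < t) :
    HasSum (fun rs : ℕ × ℕ => 2 * Complex.exp (-freq p q rs * t))
      (((Real.cosh (q * t) - Real.cos (p * t))⁻¹ : ℝ) : ℂ) := by
  set w : ℂ := Complex.exp (-(q * t) + p * t * Complex.I) with hw
  set v : ℂ := Complex.exp (-(q * t) - p * t * Complex.I) with hv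
  have hnw : ‖w‖ < 1 := by
    rw [hw, Complex.norm_exp]; simpa using mul_pos hq ht
  have hnv : ‖v‖ < 1 := by
    rw [hv, Complex.norm_exp]; simpa using mul_pos hq ht
  have h1 := hasSum_geometric_of_norm_lt_one hnw
  have h2 := hasSum_geometric_of_norm_lt_one hnv
  have h3 := (h1.mul h2 (summable_mul_of_summable_norm
    (summable_norm_geometric_of_norm_lt_one hnw)
    (summable_norm_geometric_of_norm_lt_one hnv))).mul_left (2 * Complex.exp (-(q * t)))
  have hw1 : 1 - w ≠ 0 := by
    intro h
    rw [← sub_eq_zero.mp h] at hnw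
    simp at hnw
  have hv1 : 1 - v ≠ 0 := by
    intro h
    rw [← sub_eq_zero.mp h] at hnv
    simp at hnv
  have hterm : (fun rs : ℕ × ℕ => 2 * Complex.exp (-freq p q rs * t)) =
      fun rs : ℕ × ℕ => 2 * Complex.exp (-(q * t)) * (w ^ rs.1 * v ^ rs.2) := by
    funext rs
    rw [hw, hv, ← Complex.exp_nat_mul, ← Complex.exp_nat_mul, mul_assoc, ← Complex.exp_add,
      ← Complex.exp_add]
    congr 2
    simp only [freq]
    ring
  have hval : (((Real.cosh (q * t) - Real.cos (p * t))⁻¹ : ℝ) : ℂ) =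
      2 * Complex.exp (-(q * t)) * ((1 - w)⁻¹ * (1 - v)⁻¹) := by
    have hkey : ((Real.cosh (q * t) - Real.cos (p * t) : ℝ) : ℂ) =
        Complex.exp (q * t) * ((1 - w) * (1 - v)) / 2 := by
      have e1 : w * v = Complex.exp (-(q * t)) * Complex.exp (-(q * t)) := by
        rw [hw, hv, ← Complex.exp_add, ← Complex.exp_add]; congr 1; ring
      have e2 : w = Complex.exp (-(q * t)) * Complex.exp (p * t * Complex.I) := by
        rw [hw, ← Complex.exp_add]
      have e3 : v = Complex.exp (-(q * t)) * Complex.exp (-(p * t) * Complex.I) := by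
        rw [hv, ← Complex.exp_add]; congr 1; ring
      have e4 : Complex.exp (q * t) * Complex.exp (-(q * t)) = 1 := by
        rw [← Complex.exp_add]; simp
      push_cast
      rw [Complex.cosh, Complex.cos]
      have : (1 - w) * (1 - v) = 1 - w - v + w * v := by ring
      rw [this, e1, e2, e3]
      linear_combination (Complex.exp (p * t * Complex.I) / 2 +
        Complex.exp (-(p * t) * Complex.I) / 2 - Complex.exp (-(q * t)) / 2) * e4
    rw [Complex.ofReal_inv, hkey, Complex.exp_neg]
    have := Complex.exp_ne_zero (q * t : ℂ)
    field_simp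
  rw [hterm, hval]
  exact h3

/-- Comparison with the product series `∑ (r + 1)⁻² ∑ (s + 1)⁻²`. -/
lemma summable_freq_re (q : ℝ) (hq : 0 < q) (n : ℕ) :
    Summable (fun rs : ℕ × ℕ => (((rs.1 + rs.2 + 1 : ℝ) * q) ^ (2 * n + 4))⁻¹) := by
  have hs : Summable (fun r : ℕ => (((r : ℝ) + 1) ^ 2)⁻¹) := by
    have := (summable_nat_add_iff 1).mpr (Real.summable_nat_pow_inv.mpr one_lt_two)
    simpa using this
  have hs2 := (hs.mul_of_nonneg hs (fun r => by positivity) (fun r => by positivity)).mul_left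
    ((q ^ (2 * n + 4))⁻¹)
  refine Summable.of_nonneg_of_le (fun rs => by positivity) (fun rs => ?_) hs2
  rw [mul_pow, mul_inv, mul_comm, ← mul_inv (((rs.1 : ℝ) + 1) ^ 2)]
  refine mul_le_mul_of_nonneg_left ?_ (by positivity)
  refine inv_anti₀ (by positivity) ?_
  have hr : (0 : ℝ) ≤ rs.1 := Nat.cast_nonneg _
  have hs' : (0 : ℝ) ≤ rs.2 := Nat.cast_nonneg _
  calc ((rs.1 : ℝ) + 1) ^ 2 * ((rs.2 : ℝ) + 1) ^ 2
      ≤ ((rs.1 : ℝ) + rs.2 + 1) ^ 2 * ((rs.1 : ℝ) + rs.2 + 1) ^ 2 := by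
        gcongr <;> linarith
    _ = ((rs.1 : ℝ) + rs.2 + 1) ^ 4 := by ring
    _ ≤ ((rs.1 : ℝ) + rs.2 + 1) ^ (2 * n + 4) :=
        pow_le_pow_right₀ (by linarith) (by omega)

/-- The moments of `1 / (cosh (q √x) - cos (p √x))` as double series: substitute `x = t²`, expand in
exponentials and integrate termwise. -/
lemma hasSum_moment (p : ℝ) {q : ℝ} (hq : 0 < q) (n : ℕ) :
    HasSum (fun rs : ℕ × ℕ => 4 * ((2 * n + 3).factorial : ℂ) * (freq p q rs ^ (2 * n + 4))⁻¹)
      ((∫ x in Set.Ioi (0 : ℝ), x ^ (n + 1) /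
        (Real.cosh (q * Real.sqrt x) - Real.cos (p * Real.sqrt x)) : ℝ) : ℂ) := by
  have hsub : (∫ x in Set.Ioi (0 : ℝ), x ^ (n + 1) /
        (Real.cosh (q * Real.sqrt x) - Real.cos (p * Real.sqrt x))) =
      ∫ t in Set.Ioi (0 : ℝ), 2 * t ^ (2 * n + 3) * (Real.cosh (q * t) - Real.cos (p * t))⁻¹ := by
    rw [← integral_comp_rpow_Ioi_of_pos (two_pos : (0 : ℝ) < 2)]
    refine setIntegral_congr_fun measurableSet_Ioi fun t ht => ?_
    have ht0 : (0 : ℝ) < t := ht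
    have e1 : t ^ ((2 : ℝ) - 1) = t := by norm_num
    simp only [e1, Real.rpow_two, Real.sqrt_sq ht0.le, smul_eq_mul]
    rw [div_eq_mul_inv]
    ring
  rw [hsub, ← integral_complex_ofReal]
  set F : ℕ × ℕ → ℝ → ℂ := fun rs t =>
    4 * ((t : ℂ) ^ (2 * n + 3) * Complex.exp (-freq p q rs * t)) with hF
  have hterm : ∀ rs, ∫ t in Set.Ioi (0 : ℝ), F rs t =
      4 * ((2 * n + 3).factorial : ℂ) * (freq p q rs ^ (2 * n + 4))⁻¹ := by
    intro rs
    rw [hF]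
    simp only
    rw [integral_const_mul, integral_pow_mul_exp _ (freq_re_pos p hq rs)]
    ring
  have hnorm : ∀ rs, ∫ t in Set.Ioi (0 : ℝ), ‖F rs t‖ =
      4 * ((2 * n + 3).factorial : ℝ) * (((rs.1 + rs.2 + 1 : ℝ) * q) ^ (2 * n + 4))⁻¹ := by
    intro rs
    have hpos : 0 < (((rs.1 + rs.2 + 1 : ℝ) * q : ℝ) : ℂ).re := by
      rw [Complex.ofReal_re]; positivity
    have h1 := integral_pow_mul_exp (2 * n + 3) hpos
    have h2 : ∫ t in Set.Ioi (0 : ℝ), ‖F rs t‖ =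
        4 * ∫ t in Set.Ioi (0 : ℝ), t ^ (2 * n + 3) * Real.exp (-((rs.1 + rs.2 + 1 : ℝ) * q) * t) := by
      rw [← integral_const_mul]
      refine setIntegral_congr_fun measurableSet_Ioi fun t ht => ?_
      simp only [hF]
      rw [norm_mul, norm_pow_mul_exp _ _ ht, freq_re]
      norm_num
    have h3 : (∫ t in Set.Ioi (0 : ℝ), t ^ (2 * n + 3) * Real.exp (-((rs.1 + rs.2 + 1 : ℝ) * q) * t))
        = ((2 * n + 3).factorial : ℝ) / ((rs.1 + rs.2 + 1 : ℝ) * q) ^ (2 * n + 4) := by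
      rw [← Complex.ofReal_inj, ← integral_complex_ofReal]
      push_cast
      push_cast at h1
      exact h1
    rw [h2, h3]
    ring
  have hmain := hasSum_integral_of_summable_integral_norm (μ := volume.restrict (Set.Ioi (0 : ℝ)))
    (F := F) (fun rs => (integrableOn_pow_mul_exp _ (freq_re_pos p hq rs)).const_mul 4)
    (by
      simp only [hnorm]
      exact (summable_freq_re q hq n).mul_left _)
  simp only [hterm] at hmain
  have hcongr : ∫ t in Set.Ioi (0 : ℝ),
      ((2 * t ^ (2 * n + 3) * (Real.cosh (q * t) - Real.cos (p * t))⁻¹ : ℝ) : ℂ) =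
      ∫ t in Set.Ioi (0 : ℝ), ∑' rs, F rs t := by
    refine setIntegral_congr_fun measurableSet_Ioi fun t ht => ?_
    have h := ((hasSum_inv_cosh_sub_cos p hq ht).mul_left (2 * (t : ℂ) ^ (2 * n + 3))).tsum_eq
    push_cast at h ⊢
    rw [← h]
    refine tsum_congr fun rs => ?_
    simp only [hF]
    ring
  rw [hcongr]
  exact hmain

end Moments

/-! ### Moments as lattice sums -/

section LatticeSplit

/-- A double series over `ℤ × ℤ` splits into its four quadrants. -/
lemma hasSum_int_prod {f : ℤ × ℤ → ℂ} {a b c d : ℂ}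
    (ha : HasSum (fun rs : ℕ × ℕ => f (rs.1, rs.2)) a)
    (hb : HasSum (fun rs : ℕ × ℕ => f (rs.1, -(rs.2 + 1))) b)
    (hc : HasSum (fun rs : ℕ × ℕ => f (-(rs.1 + 1), rs.2)) c)
    (hd : HasSum (fun rs : ℕ × ℕ => f (-(rs.1 + 1), -(rs.2 + 1))) d) :
    HasSum f ((a + b) + (c + d)) := by
  let e : ℤ × ℤ ≃ (ℕ × ℕ ⊕ ℕ × ℕ) ⊕ (ℕ × ℕ ⊕ ℕ × ℕ) :=
    ((Equiv.intEquivNatSumNat.prodCongr Equiv.intEquivNatSumNat).trans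
      (Equiv.sumProdDistrib ℕ ℕ (ℕ ⊕ ℕ))).trans
      (Equiv.sumCongr (Equiv.prodSumDistrib ℕ ℕ ℕ) (Equiv.prodSumDistrib ℕ ℕ ℕ))
  rw [← e.symm.hasSum_iff]
  have hneg : ∀ r : ℕ, Int.negSucc r = -((r : ℤ) + 1) := fun r => Int.negSucc_eq r
  refine HasSum.sum (HasSum.sum ?_ ?_) (HasSum.sum ?_ ?_)
  · exact ha
  · convert hb using 2 with rs
    simp only [← hneg]; rfl
  · convert hc using 2 with rs
    simp only [← hneg]; rfl
  · convert hd using 2 with rs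
    simp only [← hneg]; rfl

variable {p q : ℝ} (hp : 0 < p) (hq : 0 < q)

/-- The lattice points `l`, coordinatised so that `l - 2p = 2(a + b + 1)p - 2(a - b)qi`. -/
lemma hasSum_lattice (w : ℕ) (hw : 2 < w) :
    HasSum (fun ab : ℤ × ℤ => (((2 * (ab.1 + ab.2 + 1) * p -
      2 * (ab.1 - ab.2) * q * Complex.I : ℂ)) ^ w)⁻¹)
      ((diagPair p q hp hq).sumInvPow (2 * p) w) := by
  let e : ℤ × ℤ ≃ (diagPair p q hp hq).lattice :=
    ((Equiv.prodComm ℤ ℤ).trans ((Equiv.addRight 1).prodCongr (Equiv.addRight 1))).trans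
      (diagPair p q hp hq).latticeEquivProd.symm.toEquiv
  have h := (diagPair p q hp hq).hasSum_sumInvPow (2 * p) hw
  rw [← e.hasSum_iff] at h
  have hfun : (fun ab : ℤ × ℤ => (((2 * (ab.1 + ab.2 + 1) * p -
      2 * (ab.1 - ab.2) * q * Complex.I : ℂ)) ^ w)⁻¹) =
      (fun l : (diagPair p q hp hq).lattice => (((l : ℂ) - 2 * p) ^ w)⁻¹) ∘ e := by
    funext ab
    have he : ((e ab : (diagPair p q hp hq).lattice) : ℂ) =
        ((ab.2 + 1 : ℤ) : ℂ) * (2 * p + 2 * q * Complex.I) +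
        ((ab.1 + 1 : ℤ) : ℂ) * (2 * p - 2 * q * Complex.I) :=
      (diagPair p q hp hq).latticeEquiv_symm_apply (ab.2 + 1, ab.1 + 1)
    simp only [Function.comp_apply, he]
    push_cast
    congr 2
    ring
  rw [hfun]
  exact h

/-- The two moment integrals combine to a lattice sum: the quadrants `(+,+)`, `(-,-)` give one,
the quadrants `(+,-)`, `(-,+)` the other. -/
lemma moment_add_moment (n : ℕ) :
    (((∫ x in Set.Ioi (0 : ℝ), x ^ (n + 1) /
        (Real.cosh (p * Real.sqrt x) - Real.cos (q * Real.sqrt x))) +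
      (-1) ^ n * (∫ x in Set.Ioi (0 : ℝ), x ^ (n + 1) /
        (Real.cosh (q * Real.sqrt x) - Real.cos (p * Real.sqrt x))) : ℝ) : ℂ) =
      2 ^ (2 * n + 5) * halfDeriv hp hq (2 * n + 2) := by
  have h1 := hasSum_moment q hp n
  have h2 := hasSum_moment p hq n
  set J1 := ∫ x in Set.Ioi (0 : ℝ), x ^ (n + 1) /
        (Real.cosh (p * Real.sqrt x) - Real.cos (q * Real.sqrt x))
  set J2 := ∫ x in Set.Ioi (0 : ℝ), x ^ (n + 1) /
        (Real.cosh (q * Real.sqrt x) - Real.cos (p * Real.sqrt x))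
  have h2' := (Equiv.prodComm ℕ ℕ).hasSum_iff.mpr h2
  have hS := (hasSum_lattice hp hq (2 * n + 4) (by omega)).mul_left
    (4 * ((2 * n + 3).factorial : ℂ) * 2 ^ (2 * n + 4))
  have hI : Complex.I ^ (2 * n + 4) = (-1) ^ n := by
    rw [show 2 * n + 4 = 2 * (n + 2) by ring, pow_mul, Complex.I_sq, pow_add]; norm_num
  have heven : Even (2 * n + 4) := ⟨n + 2, by ring⟩
  have hsign : (((-1) ^ n : ℂ))⁻¹ = (-1) ^ n := by
    rw [← inv_pow]; norm_num
  -- the exponent `2n + 4` is even, so signs disappear, and a factor `i` contributes `(-1) ^ n`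
  have hA : ∀ z f : ℂ, z = 2 * f ∨ z = -(2 * f) →
      4 * ((2 * n + 3).factorial : ℂ) * 2 ^ (2 * n + 4) * (z ^ (2 * n + 4))⁻¹ =
        4 * ((2 * n + 3).factorial : ℂ) * (f ^ (2 * n + 4))⁻¹ := by
    intro z f hz
    have : z ^ (2 * n + 4) = 2 ^ (2 * n + 4) * f ^ (2 * n + 4) := by
      rcases hz with rfl | rfl
      · rw [mul_pow]
      · rw [heven.neg_pow, mul_pow]
    rw [this, mul_inv]
    field_simp
  have hB : ∀ z f : ℂ, z = 2 * (Complex.I * f) ∨ z = -(2 * (Complex.I * f)) →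
      4 * ((2 * n + 3).factorial : ℂ) * 2 ^ (2 * n + 4) * (z ^ (2 * n + 4))⁻¹ =
        (-1) ^ n * (4 * ((2 * n + 3).factorial : ℂ) * (f ^ (2 * n + 4))⁻¹) := by
    intro z f hz
    rw [hA z _ hz, mul_pow, hI, mul_inv, hsign]
    ring
  have hsum := hasSum_int_prod
    (f := fun ab : ℤ × ℤ => 4 * ((2 * n + 3).factorial : ℂ) * 2 ^ (2 * n + 4) *
      (((2 * (ab.1 + ab.2 + 1) * p - 2 * (ab.1 - ab.2) * q * Complex.I : ℂ)) ^ (2 * n + 4))⁻¹)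
    (a := J1) (b := (-1) ^ n * J2) (c := (-1) ^ n * J2) (d := J1)
    (by
      refine h1.congr_fun fun rs => ?_
      refine (hA _ _ (Or.inl ?_))
      simp only [freq]; push_cast; ring)
    (by
      refine (h2'.mul_left ((-1) ^ n)).congr_fun fun rs => ?_
      refine (hB _ _ (Or.inr ?_))
      simp only [freq, Equiv.prodComm_apply, Prod.fst_swap, Prod.snd_swap]; push_cast
      linear_combination (2 * ((rs.1 : ℂ) - rs.2) * p) * Complex.I_sq)
    (by
      refine (h2'.mul_left ((-1) ^ n)).congr_fun fun rs => ?_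
      refine (hB _ _ (Or.inl ?_))
      simp only [freq, Equiv.prodComm_apply, Prod.fst_swap, Prod.snd_swap]; push_cast
      linear_combination (2 * ((rs.2 : ℂ) - rs.1) * p) * Complex.I_sq)
    (by
      refine h1.congr_fun fun rs => ?_
      refine (hA _ _ (Or.inr ?_))
      simp only [freq]; push_cast; ring)
  have heq := hS.unique hsum
  rw [show 2 * n + 2 = 2 * n + 1 + 1 by ring, halfDeriv_eq_sumInvPow]
  push_cast
  linear_combination (-1 / 2 : ℂ) * heq

end LatticeSplit

/-! ### The moment integrals -/

/-- Each moment integral is, up to an explicit integer factor, a derivative of `℘` at `2p`. -/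
lemma Iminus_eq_halfDeriv (k : ℝ) (n : ℕ) (hp : 0 < ellipticK k)
    (hq : 0 < ellipticK (Real.sqrt (1 - k ^ 2))) :
    (Iminus k n : ℂ) = -(-1) ^ n * 2 ^ (2 * n + 5) * halfDeriv hp hq (2 * n + 2) := by
  have h := moment_add_moment hp hq n
  have hneg : (∫ x in Set.Ioi (0 : ℝ), x ^ (n + 1) /
      (Real.cos (ellipticK k * Real.sqrt x) -
        Real.cosh (ellipticK (Real.sqrt (1 - k ^ 2)) * Real.sqrt x))) =
      -∫ x in Set.Ioi (0 : ℝ), x ^ (n + 1) /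
      (Real.cosh (ellipticK (Real.sqrt (1 - k ^ 2)) * Real.sqrt x) -
        Real.cos (ellipticK k * Real.sqrt x)) := by
    rw [← integral_neg]
    congr 1
    funext x
    rw [← div_neg, neg_sub]
  rw [Iminus, hneg, mul_assoc, ← h]
  have hs : ((-1 : ℂ) ^ n) * (-1) ^ n = 1 := by
    rw [← mul_pow]; norm_num
  push_cast
  rw [pow_succ (-1 : ℂ) n]
  linear_combination (((∫ x in Set.Ioi (0 : ℝ), x ^ (n + 1) /
      (Real.cosh (ellipticK (Real.sqrt (1 - k ^ 2)) * Real.sqrt x) -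
        Real.cos (ellipticK k * Real.sqrt x)) : ℝ) : ℂ)) * hs

theorem Iminus_value_and_rationality (k : ℝ) (hk : k ∈ Set.Ioo (0 : ℝ) 1) :
    Iminus k 2 = -32 * (17 - 32 * k ^ 2 + 32 * k ^ 4) ∧
    ((∃ r : ℚ, (r : ℝ) = k ^ 2) → ∀ n : ℕ, ∃ r : ℚ, (r : ℝ) = Iminus k n) := by
  obtain ⟨h0, h1⟩ := hk
  have hk0 : 0 < k ^ 2 := by positivity
  have hk1 : k ^ 2 < 1 := by nlinarith
  have hk' : Real.sqrt (1 - k ^ 2) ^ 2 = 1 - k ^ 2 := Real.sq_sqrt (by linarith)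
  have hp : 0 < ellipticK k := ellipticK_pos hk1
  have hq : 0 < ellipticK (Real.sqrt (1 - k ^ 2)) := ellipticK_pos (by rw [hk']; linarith)
  obtain ⟨hA, hB⟩ := coeff_values hk0 hk1 hk' hp hq
  constructor
  · have h := Iminus_eq_halfDeriv k 2 hp hq
    norm_num only at h
    rw [halfDeriv_six, hA, hB] at h
    have h' : Iminus k 2 = -512 * (144 * (1 / 16 : ℝ) ^ 2 +
        32 * ((1 - 2 * k ^ 2) / 2) ^ 2 * (1 / 16)) := by
      exact_mod_cast h
    rw [h']
    ring
  · rintro ⟨r, hr⟩ n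
    obtain ⟨d, hd⟩ := halfDeriv_rat hp hq (a := (1 - 2 * r) / 2) (b := 1 / 16)
      (by rw [hA, ← hr]; push_cast; ring) (by rw [hB]; push_cast; ring) (2 * n + 2)
    refine ⟨-(-1) ^ n * 2 ^ (2 * n + 5) * d, ?_⟩
    have h := Iminus_eq_halfDeriv k n hp hq
    rw [← hd] at h
    exact_mod_cast h.symm
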